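/- arXiv:1409.6433 — 2 statements merged into one kernel-verified Lean document; each statement's English description precedes it below -/
import Mathlib

section
/- Let d ≥ 2 and let A : ℝ^d → ℝ^d be smooth and bounded. For s ≥ 0 set A_s(y) := e^{s/2} A(e^{s/2} y) and define, for ψ ∈ C_c^∞(ℝ^d, ℂ), the quadratic forms l_s[ψ] := ∫_{ℝ^d} |∇ψ(y) − iA_s(y)ψ(y)|² dy − ((d−2)/2)² ∫_{ℝ^d} |ψ(y)|²/|y|² dy + (1/16) ∫_{ℝ^d} |y|² |ψ(y)|² dy and l[ψ] := ∫_{ℝ^d} |∇ψ(y)|² dy − ((d−2)/2)² ∫_{ℝ^d} |ψ(y)|²/|y|² dy + (1/16) ∫_{ℝ^d} |y|² |ψ(y)|² dy. Then both l_s[ψ] and l[ψ] are nonnegative, and for every s ≥ 0 there is a constant C_s ≥ 1 such that for all ψ ∈ C_c^∞(ℝ^d, ℂ): C_s^{−2} ( l[ψ] + ∫ |ψ|² ) ≤ l_s[ψ] + ∫ |ψ|² ≤ C_s² ( l[ψ] + ∫ |ψ|² ). -/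
open MeasureTheory Real

/-- The quadratic form `l_s[ψ]` of the operator `(−i∇ − A_s)² − c_d/|y|² + |y|²/16`
with the singularly scaled potential `A_s(y) := e^{s/2} A(e^{s/2} y)`. -/
noncomputable def lsForm (d : ℕ)
    (A : EuclideanSpace ℝ (Fin d) → EuclideanSpace ℝ (Fin d)) (s : ℝ)
    (ψ : EuclideanSpace ℝ (Fin d) → ℂ) : ℝ :=
  (∫ y, ∑ j, ‖fderiv ℝ ψ y (EuclideanSpace.single j (1:ℝ))
      - Complex.I * (Real.exp (s/2) * A (Real.exp (s/2) • y) j : ℝ) * ψ y‖ ^ 2)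
  - ((d - 2 : ℝ)/2)^2 * (∫ y, ‖ψ y‖^2 / ‖y‖^2)
  + (1/16 : ℝ) * ∫ y, ‖y‖^2 * ‖ψ y‖^2

/-! Differentiating `t ↦ ∫ f (t y) / ‖y‖²` at `t = 1`, once under the integral sign and once after
rescaling, gives the radial integration by parts `∫ Df(y) y / ‖y‖² = (2 - d) ∫ f / ‖y‖²` for
`d ≥ 3`. With `f = |ψ|²` and `κ = (d - 2) / 2` it completes the square in the Hardy term:
`∫ |(∇ - ia)ψ|² - κ² ∫ |ψ|² / ‖y‖² = ∫ |(∇ - ia)ψ + κ ψ y / ‖y‖²|²`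
for every real potential `a`, because the contribution `ia|ψ|²` to the cross product is imaginary.
The vectors on the right for two potentials `a` and `b` differ by `i(a - b)ψ`. If `‖a - b‖ ≤ K`,
Minkowski's inequality therefore compares the two forms, each augmented by the mass `∫ |ψ|²`, up to
the factor `(1 + K)²`. -/

open scoped ENNReal

theorem hasCompactSupport_fderiv_apply_self {E F : Type*} [NormedAddCommGroup E] [NormedSpace ℝ E]
    [NormedAddCommGroup F] [NormedSpace ℝ F] {f : E → F} (hf : HasCompactSupport f) :
    HasCompactSupport fun y => fderiv ℝ f y y :=
  (hf.fderiv ℝ).mono fun y hy h => hy (by simp [h])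

theorem hasCompactSupport_norm_sq {X F : Type*} [TopologicalSpace X] [NormedAddCommGroup F]
    {f : X → F} (hf : HasCompactSupport f) : HasCompactSupport fun x => ‖f x‖ ^ 2 :=
  hf.comp_left (g := fun z => ‖z‖ ^ 2) (by simp)

section RadialWeight

variable {E F : Type*} [NormedAddCommGroup E] [NormedSpace ℝ E] [FiniteDimensional ℝ E]
  [MeasurableSpace E] [BorelSpace E] {μ : Measure E} [μ.IsAddHaarMeasure]
  [NormedAddCommGroup F] [NormedSpace ℝ F] {f : E → F} {k : ℕ}

theorem locallyIntegrable_inv_norm_pow (hk : k < Module.finrank ℝ E) :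
    LocallyIntegrable (fun y : E => (‖y‖ ^ k)⁻¹) μ :=
  locallyIntegrable_of_norm_le_rpow (C := 1) (α := k) (by lia) (by exact_mod_cast hk)
    (.of_forall fun y => by simp [rpow_neg]) (by fun_prop)

theorem integral_inv_norm_pow_smul_comp_smul (f : E → F) {t : ℝ} (ht : 0 < t) :
    ∫ y, (‖y‖ ^ k)⁻¹ • f (t • y) ∂μ =
      (t ^ k * (t ^ Module.finrank ℝ E)⁻¹) • ∫ y, (‖y‖ ^ k)⁻¹ • f y ∂μ := by
  have homogeneous (y : E) : (‖y‖ ^ k)⁻¹ = t ^ k * (‖t • y‖ ^ k)⁻¹ := by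
    rw [norm_smul, Real.norm_of_nonneg ht.le, mul_pow, mul_inv,
      mul_inv_cancel_left₀ (by positivity)]
  calc ∫ y, (‖y‖ ^ k)⁻¹ • f (t • y) ∂μ
      = ∫ y, t ^ k • (‖t • y‖ ^ k)⁻¹ • f (t • y) ∂μ := by simp only [smul_smul, ← homogeneous]
    _ = t ^ k • (t ^ Module.finrank ℝ E)⁻¹ • ∫ y, (‖y‖ ^ k)⁻¹ • f y ∂μ := by
        rw [integral_smul, Measure.integral_comp_smul_of_nonneg μ (fun y => (‖y‖ ^ k)⁻¹ • f y) t
          (hR := ht.le)]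
    _ = _ := smul_smul _ _ _

theorem exists_integrable_bound_inv_norm_pow_smul_fderiv_smul (hk : k < Module.finrank ℝ E)
    (hf : ContDiff ℝ 1 f) (hfc : HasCompactSupport f) :
    ∃ g : E → ℝ, Integrable g μ ∧
      ∀ y, ∀ t : ℝ, 2⁻¹ < t → ‖(‖y‖ ^ k)⁻¹ • fderiv ℝ f (t • y) y‖ ≤ g y := by
  have hf' : Continuous fun y => fderiv ℝ f y y :=
    (hf.continuous_fderiv one_ne_zero).clm_apply continuous_id
  have hf'c := hasCompactSupport_fderiv_apply_self hfc
  obtain ⟨R, hR⟩ := hf'c.isCompact.isBounded.exists_norm_le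
  obtain ⟨M, hM⟩ := hf'c.exists_bound_of_continuous hf'
  have hM0 : 0 ≤ M := (norm_nonneg _).trans (hM 0)
  refine ⟨(Metric.closedBall 0 (2 * R)).indicator fun y => (‖y‖ ^ k)⁻¹ * (2 * M),
    IntegrableOn.integrable_indicator
      (((locallyIntegrable_inv_norm_pow hk).integrableOn_isCompact
        (isCompact_closedBall _ _)).mul_const _) measurableSet_closedBall, fun y t ht => ?_⟩
  have ht0 : 0 < t := lt_trans (by norm_num) ht
  have htinv : t⁻¹ ≤ 2 := inv_le_of_inv_le₀ two_pos ht.le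
  have rescale : fderiv ℝ f (t • y) y = t⁻¹ • fderiv ℝ f (t • y) (t • y) := by
    rw [map_smul, inv_smul_smul₀ ht0.ne']
  rcases eq_or_ne (fderiv ℝ f (t • y) (t • y)) 0 with hzero | hne
  · rw [rescale, hzero, smul_zero, smul_zero, norm_zero]
    exact Set.indicator_nonneg (fun _ _ => by positivity) y
  · have hyR : ‖y‖ ≤ 2 * R := by
      have hty : ‖t • y‖ ≤ R := hR _ (subset_tsupport _ hne)
      calc ‖y‖ = t⁻¹ * ‖t • y‖ := by
            rw [norm_smul, Real.norm_of_nonneg ht0.le, inv_mul_cancel_left₀ ht0.ne']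
        _ ≤ 2 * R := by gcongr
    rw [Set.indicator_of_mem (mem_closedBall_zero_iff.2 hyR), rescale, norm_smul, norm_smul,
      Real.norm_of_nonneg (by positivity), Real.norm_of_nonneg (by positivity)]
    gcongr
    exact hM _

theorem hasDerivAt_integral_inv_norm_pow_smul_comp_smul (hk : k < Module.finrank ℝ E)
    (hf : ContDiff ℝ 1 f) (hfc : HasCompactSupport f) :
    HasDerivAt (fun t : ℝ => ∫ y, (‖y‖ ^ k)⁻¹ • f (t • y) ∂μ)
      (∫ y, (‖y‖ ^ k)⁻¹ • fderiv ℝ f y y ∂μ) 1 := by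
  have hw := locallyIntegrable_inv_norm_pow (μ := μ) hk
  have hw_meas : AEStronglyMeasurable (fun y : E => (‖y‖ ^ k)⁻¹) μ := hw.aestronglyMeasurable
  have hf' : Continuous fun y => fderiv ℝ f y y :=
    (hf.continuous_fderiv one_ne_zero).clm_apply continuous_id
  obtain ⟨g, hg, hbound⟩ :=
    exists_integrable_bound_inv_norm_pow_smul_fderiv_smul (μ := μ) hk hf hfc
  have hdiff (y : E) (t : ℝ) : HasDerivAt (fun t : ℝ => (‖y‖ ^ k)⁻¹ • f (t • y))
      ((‖y‖ ^ k)⁻¹ • fderiv ℝ f (t • y) y) t := by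
    have hline : HasDerivAt (fun t : ℝ => t • y) y t := by
      simpa using (hasDerivAt_id t).smul_const y
    exact ((hf.differentiable one_ne_zero _).hasFDerivAt.comp_hasDerivAt t hline).const_smul _
  simpa using (hasDerivAt_integral_of_dominated_loc_of_deriv_le
    (F := fun t y => (‖y‖ ^ k)⁻¹ • f (t • y)) (F' := fun t y => (‖y‖ ^ k)⁻¹ • fderiv ℝ f (t • y) y)
    (Ioi_mem_nhds (by norm_num : (2⁻¹ : ℝ) < 1))
    (.of_forall fun t => hw_meas.smul
      (hf.continuous.comp (continuous_const_smul t)).aestronglyMeasurable)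
    (by simpa using hw.integrable_smul_right_of_hasCompactSupport hf.continuous hfc)
    (by simpa only [one_smul] using! hw_meas.smul hf'.aestronglyMeasurable)
    (.of_forall hbound) hg (.of_forall fun y t _ => hdiff y t)).2

theorem integral_inv_norm_pow_smul_fderiv_self (hk : k < Module.finrank ℝ E)
    (hf : ContDiff ℝ 1 f) (hfc : HasCompactSupport f) :
    ∫ y, (‖y‖ ^ k)⁻¹ • fderiv ℝ f y y ∂μ =
      (k - Module.finrank ℝ E : ℝ) • ∫ y, (‖y‖ ^ k)⁻¹ • f y ∂μ := by
  have hpow : HasDerivAt (fun t : ℝ => t ^ k * (t ^ Module.finrank ℝ E)⁻¹)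
      (k - Module.finrank ℝ E : ℝ) 1 := by
    simpa [sub_eq_add_neg] using! (hasDerivAt_pow k (1 : ℝ)).mul
      ((hasDerivAt_pow (Module.finrank ℝ E) (1 : ℝ)).inv (by simp))
  refine (hasDerivAt_integral_inv_norm_pow_smul_comp_smul hk hf hfc).unique
    ((hpow.smul_const _).congr_of_eventuallyEq ?_)
  filter_upwards [Ioi_mem_nhds one_pos] with t ht
  exact integral_inv_norm_pow_smul_comp_smul f ht

end RadialWeight

section HardyCorrection

variable {E : Type*} [NormedAddCommGroup E] [NormedSpace ℝ E]

/-- For `f = ‖ψ‖ ^ 2`, the difference `‖∇ψ + κ ψ y / ‖y‖²‖² - ‖∇ψ‖²` between the energy densities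
after and before completing the square in Hardy's inequality, where `κ = (dim E - 2) / 2`. -/
noncomputable def hardyCorrection (f : E → ℝ) (y : E) : ℝ :=
  (Module.finrank ℝ E - 2 : ℝ) / 2 * ((‖y‖ ^ 2)⁻¹ * fderiv ℝ f y y) +
    ((Module.finrank ℝ E - 2 : ℝ) / 2) ^ 2 * ((‖y‖ ^ 2)⁻¹ * f y)

theorem hardyCorrection_of_finrank_eq_two (hE : Module.finrank ℝ E = 2) (f : E → ℝ) :
    hardyCorrection f = 0 := by
  ext y
  simp [hardyCorrection, hE]

variable [FiniteDimensional ℝ E] [MeasurableSpace E] [BorelSpace E] {μ : Measure E}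
  [μ.IsAddHaarMeasure] {f : E → ℝ}

theorem integrable_hardyCorrection (hE : 2 ≤ Module.finrank ℝ E) (hf : ContDiff ℝ 1 f)
    (hfc : HasCompactSupport f) : Integrable (hardyCorrection f) μ := by
  obtain hE | hE := hE.eq_or_lt
  · simp [hardyCorrection_of_finrank_eq_two hE.symm]
  have hw := locallyIntegrable_inv_norm_pow (μ := μ) hE
  have hf' : Continuous fun y => fderiv ℝ f y y :=
    (hf.continuous_fderiv one_ne_zero).clm_apply continuous_id
  exact ((hw.integrable_smul_right_of_hasCompactSupport hf'
    (hasCompactSupport_fderiv_apply_self hfc)).const_mul _).add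
    ((hw.integrable_smul_right_of_hasCompactSupport hf.continuous hfc).const_mul _)

theorem integral_hardyCorrection (hE : 2 ≤ Module.finrank ℝ E) (hf : ContDiff ℝ 1 f)
    (hfc : HasCompactSupport f) :
    ∫ y, hardyCorrection f y ∂μ =
      -(((Module.finrank ℝ E - 2 : ℝ) / 2) ^ 2 * ∫ y, f y / ‖y‖ ^ 2 ∂μ) := by
  obtain hE | hE := hE.eq_or_lt
  · simp [hardyCorrection_of_finrank_eq_two hE.symm, ← hE]
  have hw := locallyIntegrable_inv_norm_pow (μ := μ) hE
  have hf' : Continuous fun y => fderiv ℝ f y y :=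
    (hf.continuous_fderiv one_ne_zero).clm_apply continuous_id
  have byParts : ∫ y, (‖y‖ ^ 2)⁻¹ * fderiv ℝ f y y ∂μ =
      (2 - Module.finrank ℝ E : ℝ) * ∫ y, (‖y‖ ^ 2)⁻¹ * f y ∂μ :=
    integral_inv_norm_pow_smul_fderiv_self (k := 2) hE hf hfc
  have hint : Integrable (fun y => (‖y‖ ^ 2)⁻¹ * f y) μ :=
    hw.integrable_smul_right_of_hasCompactSupport hf.continuous hfc
  have hint' : Integrable (fun y => (‖y‖ ^ 2)⁻¹ * fderiv ℝ f y y) μ :=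
    hw.integrable_smul_right_of_hasCompactSupport hf' (hasCompactSupport_fderiv_apply_self hfc)
  simp only [hardyCorrection, div_eq_inv_mul (f _)]
  rw [integral_add (hint'.const_mul _) (hint.const_mul _), integral_const_mul, integral_const_mul,
    byParts]
  ring

end HardyCorrection

section MagneticGradient

variable {d : ℕ}

/-- The inclusion `ℝ^d → ℂ^d`, which lets a real vector field multiply a complex wave function. -/
noncomputable def complexify : EuclideanSpace ℝ (Fin d) →ₗᵢ[ℝ] EuclideanSpace ℂ (Fin d) where
  toFun v := WithLp.toLp 2 fun j => (v j : ℂ)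
  map_add' v w := by ext j; simp
  map_smul' r v := by ext j; simp
  norm_map' v := by simp [EuclideanSpace.norm_eq]

@[simp]
theorem complexify_apply (v : EuclideanSpace ℝ (Fin d)) (j : Fin d) : complexify v j = v j := rfl

/-- The magnetic gradient `(∇ - ia)ψ`, as a vector of `ℂ^d`. -/
noncomputable def magneticGradient (a : EuclideanSpace ℝ (Fin d) → EuclideanSpace ℝ (Fin d))
    (ψ : EuclideanSpace ℝ (Fin d) → ℂ) (y : EuclideanSpace ℝ (Fin d)) : EuclideanSpace ℂ (Fin d) :=
  WithLp.toLp 2 fun j =>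
    fderiv ℝ ψ y (EuclideanSpace.single j 1) - Complex.I * (a y j : ℝ) * ψ y

/-- The gradient `(∇ - ia)ψ + (d - 2) / 2 · ψ y / ‖y‖²`, which vanishes for `a = 0` at the virtual
ground state `‖y‖ ^ (-(d - 2) / 2)` of the Hardy operator. -/
noncomputable def groundStateGradient (a : EuclideanSpace ℝ (Fin d) → EuclideanSpace ℝ (Fin d))
    (ψ : EuclideanSpace ℝ (Fin d) → ℂ) (y : EuclideanSpace ℝ (Fin d)) : EuclideanSpace ℂ (Fin d) :=
  magneticGradient a ψ y + ((d - 2 : ℝ) / 2 * (‖y‖ ^ 2)⁻¹) • ψ y • complexify y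

variable {a b : EuclideanSpace ℝ (Fin d) → EuclideanSpace ℝ (Fin d)}
  {ψ : EuclideanSpace ℝ (Fin d) → ℂ}

theorem magneticGradient_sub_magneticGradient (y : EuclideanSpace ℝ (Fin d)) :
    magneticGradient a ψ y - magneticGradient b ψ y =
      -(Complex.I * ψ y) • complexify (a y - b y) := by
  ext j
  simp only [magneticGradient, PiLp.sub_apply, sub_sub_sub_cancel_left, map_sub, neg_smul,
    PiLp.neg_apply, PiLp.smul_apply, complexify_apply, smul_eq_mul]
  ring

theorem groundStateGradient_sub_groundStateGradient (y : EuclideanSpace ℝ (Fin d)) :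
    groundStateGradient a ψ y - groundStateGradient b ψ y =
      -(Complex.I * ψ y) • complexify (a y - b y) := by
  rw [← magneticGradient_sub_magneticGradient, groundStateGradient, groundStateGradient,
    add_sub_add_right_eq_sub]

theorem memLp_magneticGradient (ha : MemLp a ∞ volume) (hψ : ContDiff ℝ 1 ψ)
    (hψc : HasCompactSupport ψ) (p : ℝ≥0∞) : MemLp (magneticGradient a ψ) p volume := by
  have hgradient : MemLp (magneticGradient 0 ψ) p volume := by
    refine Continuous.memLp_of_hasCompactSupport ?_ ?_
    · have := hψ.continuous_fderiv one_ne_zero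
      unfold magneticGradient
      simp only [Pi.zero_apply, PiLp.zero_apply]
      fun_prop
    · exact (hψc.fderiv ℝ).mono fun y hy h => hy <| by ext j; simp [magneticGradient, h]
  have hpotential : MemLp (fun y => -(Complex.I * ψ y) • complexify (a y)) p volume := by
    have ha' : MemLp (fun y => complexify (a y)) ∞ volume :=
      complexify.toContinuousLinearMap.comp_memLp' ha
    have hcont : Continuous fun y => -(Complex.I * ψ y) :=
      (hψ.continuous.const_mul Complex.I).neg
    have hsupp : HasCompactSupport fun y => -(Complex.I * ψ y) :=
      hψc.comp_left (g := fun z => -(Complex.I * z)) (by simp)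
    exact MemLp.smul (p := p) (q := ∞) (r := p) ha' (hcont.memLp_of_hasCompactSupport hsupp)
  refine (hgradient.add hpotential).ae_eq (.of_forall fun y => ?_)
  have h := magneticGradient_sub_magneticGradient (a := a) (b := 0) (ψ := ψ) y
  rwa [Pi.zero_apply, sub_zero, sub_eq_iff_eq_add', eq_comm] at h

theorem two_mul_re_inner_magneticGradient {y : EuclideanSpace ℝ (Fin d)}
    (hψ : DifferentiableAt ℝ ψ y) :
    2 * (inner ℂ (magneticGradient a ψ y) (ψ y • complexify y)).re =
      fderiv ℝ (fun x => ‖ψ x‖ ^ 2) y y := by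
  have coordinates (L : EuclideanSpace ℝ (Fin d) →L[ℝ] ℂ) :
      L y = ∑ j, y j • L (EuclideanSpace.single j 1) := by
    conv_lhs => rw [← (EuclideanSpace.basisFun (Fin d) ℝ).sum_repr y, map_sum]
    simp
  have diamagnetic (j : Fin d) :
      (inner ℂ (magneticGradient a ψ y j) (ψ y * y j)).re =
        y j * inner ℝ (ψ y) (fderiv ℝ ψ y (EuclideanSpace.single j 1)) := by
    simp only [magneticGradient, RCLike.inner_apply, Complex.inner, map_sub, map_mul,
      Complex.conj_I, Complex.conj_ofReal, Complex.mul_re, Complex.mul_im, Complex.sub_re,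
      Complex.sub_im, Complex.neg_re, Complex.neg_im, Complex.ofReal_re, Complex.ofReal_im,
      Complex.conj_re, Complex.conj_im, Complex.I_re, Complex.I_im]
    ring
  rw [hψ.hasFDerivAt.norm_sq.fderiv]
  simp only [smul_apply, ContinuousLinearMap.comp_apply, innerSL_apply_apply, coordinates,
    inner_sum, real_inner_smul_right, PiLp.inner_apply, PiLp.smul_apply, complexify_apply,
    smul_eq_mul, Complex.re_sum, diamagnetic, nsmul_eq_mul, Nat.cast_ofNat]

theorem norm_groundStateGradient_sq {y : EuclideanSpace ℝ (Fin d)} (hψ : DifferentiableAt ℝ ψ y) :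
    ‖groundStateGradient a ψ y‖ ^ 2 =
      ‖magneticGradient a ψ y‖ ^ 2 + hardyCorrection (fun x => ‖ψ x‖ ^ 2) y := by
  have cross := two_mul_re_inner_magneticGradient (a := a) hψ
  have hnorm : (‖y‖ ^ 2)⁻¹ ^ 2 * ‖y‖ ^ 2 = (‖y‖ ^ 2)⁻¹ := by
    rcases eq_or_ne ‖y‖ 0 with h | h
    · simp [h]
    · field_simp
  rw [groundStateGradient, norm_add_sq (𝕜 := ℂ), inner_smul_right_eq_smul, norm_smul, norm_smul,
    LinearIsometry.norm_map, hardyCorrection, finrank_euclideanSpace_fin, ← cross, RCLike.smul_re]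
  simp only [RCLike.re_to_complex, mul_pow, Real.norm_eq_abs, sq_abs]
  linear_combination ((d - 2 : ℝ) / 2) ^ 2 * ‖ψ y‖ ^ 2 * hnorm

theorem integrable_norm_groundStateGradient_sq (hd : 2 ≤ d) (hψ : ContDiff ℝ 1 ψ)
    (hψc : HasCompactSupport ψ) (hDψ : MemLp (magneticGradient a ψ) 2 volume) :
    Integrable fun y => ‖groundStateGradient a ψ y‖ ^ 2 := by
  simp only [fun y => norm_groundStateGradient_sq (a := a) (hψ.differentiable one_ne_zero y)]
  exact (hDψ.integrable_norm_pow two_ne_zero).add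
    (integrable_hardyCorrection (by simpa) (hψ.norm_sq ℝ) (hasCompactSupport_norm_sq hψc))

theorem integral_norm_groundStateGradient_sq (hd : 2 ≤ d) (hψ : ContDiff ℝ 1 ψ)
    (hψc : HasCompactSupport ψ) (hDψ : MemLp (magneticGradient a ψ) 2 volume) :
    ∫ y, ‖groundStateGradient a ψ y‖ ^ 2 = (∫ y, ‖magneticGradient a ψ y‖ ^ 2) -
      ((d - 2 : ℝ) / 2) ^ 2 * ∫ y, ‖ψ y‖ ^ 2 / ‖y‖ ^ 2 := by
  simp only [fun y => norm_groundStateGradient_sq (a := a) (hψ.differentiable one_ne_zero y)]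
  rw [integral_add (hDψ.integrable_norm_pow two_ne_zero)
    (integrable_hardyCorrection (by simpa) (hψ.norm_sq ℝ) (hasCompactSupport_norm_sq hψc)),
    integral_hardyCorrection (by simpa) (hψ.norm_sq ℝ) (hasCompactSupport_norm_sq hψc),
    finrank_euclideanSpace_fin, ← sub_eq_add_neg]

theorem norm_groundStateGradient_sq_add_le {K : ℝ} {y : EuclideanSpace ℝ (Fin d)}
    (hK : ‖a y - b y‖ ≤ K) :
    ‖groundStateGradient a ψ y‖ ^ 2 + ‖ψ y‖ ^ 2 ≤
      (1 + K) ^ 2 * (‖groundStateGradient b ψ y‖ ^ 2 + ‖ψ y‖ ^ 2) := by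
  have hK0 : 0 ≤ K := (norm_nonneg _).trans hK
  have triangle : ‖groundStateGradient a ψ y‖ ≤ ‖groundStateGradient b ψ y‖ + K * ‖ψ y‖ := by
    calc ‖groundStateGradient a ψ y‖
        ≤ ‖groundStateGradient b ψ y‖ + ‖groundStateGradient a ψ y - groundStateGradient b ψ y‖ :=
          norm_le_insert' _ _
      _ = ‖groundStateGradient b ψ y‖ + ‖a y - b y‖ * ‖ψ y‖ := by
          rw [groundStateGradient_sub_groundStateGradient, norm_smul, LinearIsometry.norm_map,
            norm_neg, norm_mul, Complex.norm_I, one_mul, mul_comm]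
      _ ≤ ‖groundStateGradient b ψ y‖ + K * ‖ψ y‖ := by gcongr
  have minkowski (x w : ℝ) : (x + K * w) ^ 2 + w ^ 2 ≤ (1 + K) ^ 2 * (x ^ 2 + w ^ 2) := by
    have gap : 0 ≤ K * (x - w) ^ 2 + (K + K ^ 2) * x ^ 2 + K * w ^ 2 := by positivity
    linear_combination gap
  exact le_trans (by gcongr) (minkowski _ _)

end MagneticGradient

section ScaledForm

variable {d : ℕ} {A B : EuclideanSpace ℝ (Fin d) → EuclideanSpace ℝ (Fin d)} {s t M : ℝ}
  {ψ : EuclideanSpace ℝ (Fin d) → ℂ}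

/-- The singularly scaled potential `A_s(y) = e^{s/2} A(e^{s/2} y)`. -/
noncomputable def scaledPotential (A : EuclideanSpace ℝ (Fin d) → EuclideanSpace ℝ (Fin d)) (s : ℝ)
    (y : EuclideanSpace ℝ (Fin d)) : EuclideanSpace ℝ (Fin d) :=
  exp (s / 2) • A (exp (s / 2) • y)

theorem ae_norm_scaledPotential_le (hA : ∀ᵐ x, ‖A x‖ ≤ M) (s : ℝ) :
    ∀ᵐ y, ‖scaledPotential A s y‖ ≤ exp (s / 2) * M := by
  have hscale := Measure.quasiMeasurePreserving_smul (E := EuclideanSpace ℝ (Fin d)) volume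
    (exp_ne_zero (s / 2))
  filter_upwards [hscale.ae hA] with y hy
  rw [scaledPotential, norm_smul, Real.norm_of_nonneg (exp_pos _).le]
  gcongr

theorem memLp_top_scaledPotential (hA : MemLp A ∞ volume) (s : ℝ) :
    MemLp (scaledPotential A s) ∞ volume := by
  have hscale := Measure.quasiMeasurePreserving_smul (E := EuclideanSpace ℝ (Fin d)) volume
    (exp_ne_zero (s / 2))
  have hmeas : AEStronglyMeasurable (scaledPotential A s) volume :=
    (hA.aestronglyMeasurable.comp_quasiMeasurePreserving hscale).const_smul (exp (s / 2))
  exact memLp_top_of_bound hmeas _ (ae_norm_scaledPotential_le (ae_le_lpNorm_exponent_top hA) s)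

theorem lsForm_eq (hd : 2 ≤ d) (hψ : ContDiff ℝ 1 ψ) (hψc : HasCompactSupport ψ)
    (hA : MemLp (magneticGradient (scaledPotential A s) ψ) 2 volume) :
    lsForm d A s ψ = (∫ y, ‖groundStateGradient (scaledPotential A s) ψ y‖ ^ 2) +
      1 / 16 * ∫ y, ‖y‖ ^ 2 * ‖ψ y‖ ^ 2 := by
  rw [integral_norm_groundStateGradient_sq hd hψ hψc hA]
  simp [lsForm, magneticGradient, scaledPotential, EuclideanSpace.norm_sq_eq]

theorem lsForm_nonneg (hd : 2 ≤ d) (hψ : ContDiff ℝ 1 ψ) (hψc : HasCompactSupport ψ)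
    (hA : MemLp (magneticGradient (scaledPotential A s) ψ) 2 volume) : 0 ≤ lsForm d A s ψ := by
  rw [lsForm_eq hd hψ hψc hA]
  positivity

theorem lsForm_add_integral_norm_sq_le (hd : 2 ≤ d) (hψ : ContDiff ℝ 1 ψ)
    (hψc : HasCompactSupport ψ) (hA : MemLp (magneticGradient (scaledPotential A s) ψ) 2 volume)
    (hB : MemLp (magneticGradient (scaledPotential B t) ψ) 2 volume) {K : ℝ}
    (hK : ∀ᵐ y, ‖scaledPotential A s y - scaledPotential B t y‖ ≤ K) :
    lsForm d A s ψ + ∫ y, ‖ψ y‖ ^ 2 ≤ (1 + K) ^ 2 * (lsForm d B t ψ + ∫ y, ‖ψ y‖ ^ 2) := by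
  obtain ⟨_, hy⟩ := hK.exists
  have hK0 : 0 ≤ K := (norm_nonneg _).trans hy
  have hψ2 : Integrable fun y => ‖ψ y‖ ^ 2 :=
    (hψ.continuous.norm.pow 2).integrable_of_hasCompactSupport (hasCompactSupport_norm_sq hψc)
  have hGA := integrable_norm_groundStateGradient_sq hd hψ hψc hA
  have hGB := integrable_norm_groundStateGradient_sq hd hψ hψc hB
  have energy : (∫ y, ‖groundStateGradient (scaledPotential A s) ψ y‖ ^ 2) + ∫ y, ‖ψ y‖ ^ 2 ≤
      (1 + K) ^ 2 *
        ((∫ y, ‖groundStateGradient (scaledPotential B t) ψ y‖ ^ 2) + ∫ y, ‖ψ y‖ ^ 2) := by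
    rw [← integral_add hGA hψ2, ← integral_add hGB hψ2, ← integral_const_mul]
    exact integral_mono_ae (hGA.add hψ2) ((hGB.add hψ2).const_mul _)
      (hK.mono fun _ => norm_groundStateGradient_sq_add_le)
  have trap : 1 / 16 * ∫ y, ‖y‖ ^ 2 * ‖ψ y‖ ^ 2 ≤
      (1 + K) ^ 2 * (1 / 16 * ∫ y, ‖y‖ ^ 2 * ‖ψ y‖ ^ 2) :=
    le_mul_of_one_le_left (by positivity) (one_le_pow₀ (by linarith))
  rw [lsForm_eq hd hψ hψc hA, lsForm_eq hd hψ hψc hB]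
  linear_combination energy + trap

end ScaledForm

theorem stmt12_general (d : ℕ) (hd : 2 ≤ d)
    (A : EuclideanSpace ℝ (Fin d) → EuclideanSpace ℝ (Fin d)) (hA : MemLp A ∞ volume) :
    ((∀ s : ℝ, ∀ ψ : EuclideanSpace ℝ (Fin d) → ℂ,
        ContDiff ℝ 1 ψ → HasCompactSupport ψ → 0 ≤ lsForm d A s ψ) ∧
     (∀ ψ : EuclideanSpace ℝ (Fin d) → ℂ,
        ContDiff ℝ 1 ψ → HasCompactSupport ψ → 0 ≤ lsForm d (fun _ => 0) 0 ψ)) ∧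
    (∀ s : ℝ, ∃ C : ℝ, 1 ≤ C ∧
      ∀ ψ : EuclideanSpace ℝ (Fin d) → ℂ, ContDiff ℝ 1 ψ → HasCompactSupport ψ →
        (C^2)⁻¹ * (lsForm d (fun _ => 0) 0 ψ + ∫ y, ‖ψ y‖^2)
            ≤ lsForm d A s ψ + ∫ y, ‖ψ y‖^2 ∧
        lsForm d A s ψ + ∫ y, ‖ψ y‖^2
            ≤ C^2 * (lsForm d (fun _ => 0) 0 ψ + ∫ y, ‖ψ y‖^2)) := by
  have hDψ {B : EuclideanSpace ℝ (Fin d) → EuclideanSpace ℝ (Fin d)} (hB : MemLp B ∞ volume) (s : ℝ)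
      {ψ : EuclideanSpace ℝ (Fin d) → ℂ} (hψ : ContDiff ℝ 1 ψ) (hψc : HasCompactSupport ψ) :
      MemLp (magneticGradient (scaledPotential B s) ψ) 2 volume :=
    memLp_magneticGradient (memLp_top_scaledPotential hB s) hψ hψc 2
  refine ⟨⟨fun s ψ hψ hψc => lsForm_nonneg hd hψ hψc (hDψ hA s hψ hψc),
    fun ψ hψ hψc => lsForm_nonneg hd hψ hψc (hDψ MemLp.zero 0 hψ hψc)⟩, fun s => ?_⟩
  have hbound := ae_norm_scaledPotential_le (ae_le_lpNorm_exponent_top hA) s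
  have hC : 1 ≤ 1 + exp (s / 2) * lpNorm A ∞ volume :=
    le_add_of_nonneg_right (mul_nonneg (exp_pos _).le lpNorm_nonneg)
  refine ⟨1 + exp (s / 2) * lpNorm A ∞ volume, hC, fun ψ hψ hψc => ⟨?_, ?_⟩⟩
  · rw [inv_mul_le_iff₀ (by positivity)]
    exact lsForm_add_integral_norm_sq_le hd hψ hψc (hDψ MemLp.zero 0 hψ hψc) (hDψ hA s hψ hψc)
      (hbound.mono fun y hy => by simpa [scaledPotential] using hy)
  · exact lsForm_add_integral_norm_sq_le hd hψ hψc (hDψ hA s hψ hψc) (hDψ MemLp.zero 0 hψ hψc)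
      (hbound.mono fun y hy => by simpa [scaledPotential] using hy)

theorem stmt12 (d : ℕ) (hd : 2 ≤ d)
    (A : EuclideanSpace ℝ (Fin d) → EuclideanSpace ℝ (Fin d))
    (hA : ContDiff ℝ (⊤ : ℕ∞) A) (hAbd : ∃ M : ℝ, ∀ x, ‖A x‖ ≤ M) :
    ((∀ s : ℝ, 0 ≤ s → ∀ ψ : EuclideanSpace ℝ (Fin d) → ℂ,
        ContDiff ℝ (⊤ : ℕ∞) ψ → HasCompactSupport ψ → 0 ≤ lsForm d A s ψ) ∧
     (∀ ψ : EuclideanSpace ℝ (Fin d) → ℂ,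
        ContDiff ℝ (⊤ : ℕ∞) ψ → HasCompactSupport ψ → 0 ≤ lsForm d (fun _ => 0) 0 ψ)) ∧
    (∀ s : ℝ, 0 ≤ s → ∃ C : ℝ, 1 ≤ C ∧
      ∀ ψ : EuclideanSpace ℝ (Fin d) → ℂ, ContDiff ℝ (⊤ : ℕ∞) ψ → HasCompactSupport ψ →
        (C^2)⁻¹ * (lsForm d (fun _ => 0) 0 ψ + ∫ y, ‖ψ y‖^2)
            ≤ lsForm d A s ψ + ∫ y, ‖ψ y‖^2 ∧
        lsForm d A s ψ + ∫ y, ‖ψ y‖^2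
            ≤ C^2 * (lsForm d (fun _ => 0) 0 ψ + ∫ y, ‖ψ y‖^2)) := by
  obtain ⟨M, hM⟩ := hAbd
  obtain ⟨⟨hA_nonneg, hzero_nonneg⟩, hequiv⟩ := stmt12_general d hd A
    (memLp_top_of_bound hA.continuous.aestronglyMeasurable M (.of_forall hM))
  exact ⟨⟨fun s _ ψ hψ => hA_nonneg s ψ (hψ.of_le (by simp)),
    fun ψ hψ => hzero_nonneg ψ (hψ.of_le (by simp))⟩,
    fun s _ => (hequiv s).imp fun C hC => ⟨hC.1, fun ψ hψ => hC.2 ψ (hψ.of_le (by simp))⟩⟩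
end

section
/- Let d ≥ 2 and let A : ℝ^d → ℝ^d be smooth. For s ≥ 0 set A_s(y) := e^{s/2} A(e^{s/2} y). Then for every s ≥ 0 and every ψ ∈ C_c^∞(ℝ^d, ℂ): ∫_{ℝ^d} |∇ψ(y) − iA_s(y)ψ(y)|² dy − ((d−2)/2)² ∫_{ℝ^d} |ψ(y)|²/|y|² dy + (1/16) ∫_{ℝ^d} |y|² |ψ(y)|² dy ≥ (1/2) ∫_{ℝ^d} |ψ(y)|² dy. -/
/-!
For a `C¹` vector field `V`, expanding `0 ≤ |Dψ + V ⊗ ψ|²` and integrating the cross term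
`2 Re ⟨ψ, D_V ψ⟩ = div (|ψ|² V) - |ψ|² div V` gives `∫ (div V - |V|²) |ψ|² ≤ ∫ |Dψ|²`. The magnetic
potential has dropped out, because `i A ψ` is orthogonal to `ψ` for the real inner product.

The ground state `|y|^(-c) exp (-|y|²/8)`, `c = (d - 2)/2`, of the harmonic oscillator with critical
Hardy potential suggests taking `V y = (c / |y|² + 1/4) y`, its negative logarithmic gradient, for
which `div V - |V|² = c² / |y|² + 1/2 - |y|² / 16`. Since this field is singular at the origin,
`|y|²` is replaced by `|y|² + ε` in the denominator, and `ε → 0` by Fatou's lemma.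
-/

open MeasureTheory Real

open scoped RealInnerProductSpace

section DivergenceTheorem

variable {E F : Type*} [NormedAddCommGroup E] [NormedSpace ℝ E] [NormedAddCommGroup F]
  [NormedSpace ℝ F]

/-- The divergence of a vector field `V`, as the trace of its derivative, so that no basis has to be
chosen. It takes the junk value `0` where `V` is not differentiable. -/
noncomputable def divergence (V : E → E) (y : E) : ℝ :=
  LinearMap.trace ℝ E (fderiv ℝ V y)

theorem hasCompactSupport_divergence {V : E → E} (hV : HasCompactSupport V) :
    HasCompactSupport (divergence V) :=
  (hV.fderiv ℝ).comp_left (g := fun L : E →L[ℝ] E => LinearMap.trace ℝ E L) (by simp)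

variable [FiniteDimensional ℝ E]

theorem continuous_divergence {V : E → E} (hV : ContDiff ℝ 1 V) : Continuous (divergence V) :=
  (LinearMap.continuous_of_finiteDimensional
    (LinearMap.trace ℝ E ∘ₗ ContinuousLinearMap.coeLM ℝ)).comp (hV.continuous_fderiv one_ne_zero)

theorem divergence_fun_id (y : E) : divergence (fun y : E => y) y = Module.finrank ℝ E := by
  simp [divergence]

theorem divergence_fun_smul {f : E → ℝ} {V : E → E} {y : E} (hf : DifferentiableAt ℝ f y)
    (hV : DifferentiableAt ℝ V y) :
    divergence (fun y => f y • V y) y = f y * divergence V y + fderiv ℝ f y (V y) := by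
  simp [divergence, fderiv_fun_smul hf hV]

variable [MeasurableSpace E] [BorelSpace E] (μ : Measure E) [μ.IsAddHaarMeasure]

theorem integral_fderiv_apply_eq_zero {f : E → F} (hf : ContDiff ℝ 1 f)
    (hsupp : HasCompactSupport f) (v : E) : ∫ y, fderiv ℝ f y v ∂μ = 0 := by
  have hint : Integrable (fun y => fderiv ℝ f y v) μ :=
    ((hf.continuous_fderiv one_ne_zero).clm_apply continuous_const).integrable_of_hasCompactSupport
      (hsupp.fderiv_apply ℝ v)
  simpa using integral_smul_fderiv_eq_neg_fderiv_smul_of_integrable (μ := μ) (𝕜 := ℝ)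
    (f := fun _ => (1 : ℝ)) (g := f) (v := v) (by simp) (by simpa using hint)
    (by simpa using hf.continuous.integrable_of_hasCompactSupport hsupp)
    (fun x _ => differentiableAt_const _) (fun x _ => hf.differentiable one_ne_zero x)

theorem integral_divergence_eq_zero {V : E → E} (hV : ContDiff ℝ 1 V)
    (hsupp : HasCompactSupport V) : ∫ y, divergence V y ∂μ = 0 := by
  have hint : Integrable (fderiv ℝ V) μ :=
    (hV.continuous_fderiv one_ne_zero).integrable_of_hasCompactSupport (hsupp.fderiv ℝ)
  have hzero : ∫ y, fderiv ℝ V y ∂μ = 0 := by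
    ext v
    rw [ContinuousLinearMap.integral_apply hint, integral_fderiv_apply_eq_zero μ hV hsupp,
      zero_apply]
  have hcomm := (LinearMap.toContinuousLinearMap
    (LinearMap.trace ℝ E ∘ₗ ContinuousLinearMap.coeLM ℝ)).integral_comp_comm hint
  rw [hzero, map_zero] at hcomm
  exact hcomm

end DivergenceTheorem

section SquaredNorm

variable {X F : Type*} [TopologicalSpace X] [NormedAddCommGroup F] {ψ : X → F}

theorem hasCompactSupport_sq_norm (hsupp : HasCompactSupport ψ) :
    HasCompactSupport fun y => ‖ψ y‖ ^ 2 :=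
  hsupp.comp_left (g := fun z : F => ‖z‖ ^ 2) (by simp)

theorem integrable_mul_sq_norm [MeasurableSpace X] [OpensMeasurableSpace X] (μ : Measure X)
    [IsFiniteMeasureOnCompacts μ] {f : X → ℝ} (hf : Continuous f) (hψ : Continuous ψ)
    (hsupp : HasCompactSupport ψ) : Integrable (fun y => f y * ‖ψ y‖ ^ 2) μ :=
  Continuous.integrable_of_hasCompactSupport (by fun_prop)
    (hasCompactSupport_sq_norm hsupp).mul_left

end SquaredNorm

section VectorFieldMethod

variable {E F ι : Type*} [NormedAddCommGroup E] [InnerProductSpace ℝ E]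
  [NormedAddCommGroup F] [InnerProductSpace ℝ F] [Fintype ι]

theorem neg_sq_norm_mul_sq_norm_le (b : OrthonormalBasis ι ℝ E) (L : E →ₗ[ℝ] F) (v : E) (z : F) :
    -(‖v‖ ^ 2 * ‖z‖ ^ 2) ≤ ∑ j, ‖L (b j)‖ ^ 2 + 2 * ⟪z, L v⟫ := by
  have hcross : ∑ j, ⟪b j, v⟫ * ⟪z, L (b j)⟫ = ⟪z, L v⟫ := by
    conv_rhs => rw [← b.sum_repr' v, map_sum, inner_sum]
    simp_rw [map_smul, inner_smul_right]
  have hterm (j : ι) : ‖L (b j) + ⟪b j, v⟫ • z‖ ^ 2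
      = ‖L (b j)‖ ^ 2 + 2 * (⟪b j, v⟫ * ⟪z, L (b j)⟫) + ⟪b j, v⟫ ^ 2 * ‖z‖ ^ 2 := by
    rw [norm_add_sq_real, inner_smul_right, real_inner_comm z, norm_smul, mul_pow,
      norm_eq_abs, sq_abs]
  have hexpand : ∑ j, ‖L (b j) + ⟪b j, v⟫ • z‖ ^ 2
      = ∑ j, ‖L (b j)‖ ^ 2 + 2 * ⟪z, L v⟫ + ‖v‖ ^ 2 * ‖z‖ ^ 2 := by
    simp_rw [hterm, Finset.sum_add_distrib, ← Finset.mul_sum, ← Finset.sum_mul, hcross,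
      b.sum_sq_inner_right]
  have hnonneg : 0 ≤ ∑ j, ‖L (b j) + ⟪b j, v⟫ • z‖ ^ 2 := by positivity
  linarith

variable [FiniteDimensional ℝ E]

theorem divergence_sq_norm_smul {ψ : E → F} {V : E → E} {y : E} (hψ : DifferentiableAt ℝ ψ y)
    (hV : DifferentiableAt ℝ V y) :
    divergence (fun y => ‖ψ y‖ ^ 2 • V y) y
      = divergence V y * ‖ψ y‖ ^ 2 + 2 * ⟪ψ y, fderiv ℝ ψ y (V y)⟫ := by
  rw [divergence_fun_smul (hψ.norm_sq ℝ) hV, hψ.hasFDerivAt.norm_sq.fderiv]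
  simp [mul_comm]

variable [MeasurableSpace E] [BorelSpace E] {μ : Measure E} [μ.IsAddHaarMeasure]

-- `hD` holds whenever `D` is a metric connection applied to `ψ`: such a `D` differs from the
-- derivative by skew endomorphisms.
theorem integral_divergence_sub_sq_norm_mul_le (b : OrthonormalBasis ι ℝ E) {ψ : E → F}
    (hψ : ContDiff ℝ 1 ψ) (hsupp : HasCompactSupport ψ) {D : E → E →ₗ[ℝ] F}
    (hD : ∀ y v, ⟪ψ y, D y v⟫ = ⟪ψ y, fderiv ℝ ψ y v⟫)
    (hint : Integrable (fun y => ∑ j, ‖D y (b j)‖ ^ 2) μ) {V : E → E} (hV : ContDiff ℝ 1 V) :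
    ∫ y, (divergence V y - ‖V y‖ ^ 2) * ‖ψ y‖ ^ 2 ∂μ ≤ ∫ y, ∑ j, ‖D y (b j)‖ ^ 2 ∂μ := by
  set W : E → E := fun y => ‖ψ y‖ ^ 2 • V y with hW
  have hWdiff : ContDiff ℝ 1 W := (hψ.norm_sq ℝ).smul hV
  have hWsupp : HasCompactSupport W := (hasCompactSupport_sq_norm hsupp).smul_right
  have hWint : Integrable (divergence W) μ :=
    (continuous_divergence hWdiff).integrable_of_hasCompactSupport
      (hasCompactSupport_divergence hWsupp)
  have hpointwise (y : E) : (divergence V y - ‖V y‖ ^ 2) * ‖ψ y‖ ^ 2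
      ≤ ∑ j, ‖D y (b j)‖ ^ 2 + divergence W y := by
    have hsq := neg_sq_norm_mul_sq_norm_le b (D y) (V y) (ψ y)
    rw [hD] at hsq
    rw [hW, divergence_sq_norm_smul (hψ.differentiable one_ne_zero y)
      (hV.differentiable one_ne_zero y)]
    linarith
  calc ∫ y, (divergence V y - ‖V y‖ ^ 2) * ‖ψ y‖ ^ 2 ∂μ
      ≤ ∫ y, (∑ j, ‖D y (b j)‖ ^ 2 + divergence W y) ∂μ :=
        integral_mono (integrable_mul_sq_norm μ
          ((continuous_divergence hV).sub (hV.continuous.norm.pow 2)) hψ.continuous hsupp)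
          (hint.add hWint) hpointwise
    _ = ∫ y, ∑ j, ‖D y (b j)‖ ^ 2 ∂μ := by
        rw [integral_add hint hWint, integral_divergence_eq_zero μ hWdiff hWsupp, add_zero]

end VectorFieldMethod

section RegularizedField

variable {E : Type*} [NormedAddCommGroup E] [InnerProductSpace ℝ E] {c ω ε : ℝ}

/-- The negative logarithmic gradient of `(|y|² + ε)^(-c/2) exp (-ω|y|²/2)`, a regularization at the
origin of the ground state of the harmonic oscillator with critical Hardy potential. -/
noncomputable def regularizedHardyField (c ω ε : ℝ) (y : E) : E :=
  (c * (‖y‖ ^ 2 + ε)⁻¹ + ω) • y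

theorem hasFDerivAt_mul_inv_sq_norm_add (hε : 0 < ε) (y : E) :
    HasFDerivAt (fun y : E => c * (‖y‖ ^ 2 + ε)⁻¹ + ω)
      (-(2 * c * (‖y‖ ^ 2 + ε)⁻¹ ^ 2) • innerSL ℝ y) y := by
  have hne : ‖y‖ ^ 2 + ε ≠ 0 := by positivity
  refine ((((hasDerivAt_inv hne).comp_hasFDerivAt y
    ((hasFDerivAt_id y).norm_sq.add_const ε)).const_mul c).add_const ω).congr_fderiv ?_
  ext v
  simp only [id_eq, ContinuousLinearMap.comp_id, neg_smul, smul_neg, neg_apply, smul_apply,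
    coe_innerSL_apply, nsmul_eq_mul, Nat.cast_ofNat, smul_eq_mul, inv_pow]
  ring

theorem contDiff_regularizedHardyField (hε : 0 < ε) :
    ContDiff ℝ 1 (regularizedHardyField c ω ε : E → E) := by
  have hinv : ContDiff ℝ 1 fun y : E => (‖y‖ ^ 2 + ε)⁻¹ :=
    ((contDiff_id.norm_sq ℝ).add contDiff_const).inv fun y => by positivity
  exact ((contDiff_const.mul hinv).add contDiff_const).smul contDiff_id

theorem divergence_regularizedHardyField [FiniteDimensional ℝ E] (hε : 0 < ε) (y : E) :
    divergence (regularizedHardyField c ω ε) y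
      = Module.finrank ℝ E * (c * (‖y‖ ^ 2 + ε)⁻¹ + ω)
        - 2 * c * (‖y‖ ^ 2 + ε)⁻¹ ^ 2 * ‖y‖ ^ 2 := by
  have hfderiv := hasFDerivAt_mul_inv_sq_norm_add (c := c) (ω := ω) hε y
  unfold regularizedHardyField
  rw [divergence_fun_smul hfderiv.differentiableAt differentiableAt_fun_id, divergence_fun_id,
    hfderiv.fderiv]
  simp only [smul_apply, coe_innerSL_apply, real_inner_self_eq_norm_sq, smul_eq_mul]
  ring

theorem le_divergence_sub_sq_norm_regularizedHardyField [FiniteDimensional ℝ E] (hc : 0 ≤ c)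
    (hdim : (Module.finrank ℝ E : ℝ) = 2 * c + 2) (hω : 0 ≤ ω) (hε : 0 < ε) (y : E) :
    c ^ 2 * (‖y‖ ^ 2 + ε)⁻¹ + 2 * ω - ω ^ 2 * ‖y‖ ^ 2
      ≤ divergence (regularizedHardyField c ω ε) y - ‖regularizedHardyField c ω ε y‖ ^ 2 := by
  rw [divergence_regularizedHardyField hε, hdim, regularizedHardyField, norm_smul, mul_pow,
    norm_eq_abs, sq_abs]
  have herror : 0 ≤ (2 * c + c ^ 2) * ε * (‖y‖ ^ 2 + ε)⁻¹ ^ 2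
      + 2 * c * ω * ε * (‖y‖ ^ 2 + ε)⁻¹ := by positivity
  have hne : ‖y‖ ^ 2 + ε ≠ 0 := by positivity
  set q := (‖y‖ ^ 2 + ε)⁻¹
  have hsq_mul : ‖y‖ ^ 2 * q = 1 - ε * q := by
    have hcancel : (‖y‖ ^ 2 + ε) * q = 1 := mul_inv_cancel₀ hne
    linarith
  linear_combination herror + (2 * c * q + c ^ 2 * q + 2 * c * ω) * hsq_mul

end RegularizedField

section Hardy

open Filter Topology

theorem integrable_and_integral_le_of_tendsto {α : Type*} [MeasurableSpace α] {μ : Measure α}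
    {f : α → ℝ} {u : ℕ → α → ℝ} {K : ℝ} (hu : ∀ n, Integrable (u n) μ)
    (hu_nonneg : ∀ n, 0 ≤ᵐ[μ] u n)
    (hlim : ∀ᵐ x ∂μ, Tendsto (fun n => u n x) atTop (𝓝 (f x)))
    (hK : ∀ n, ∫ x, u n x ∂μ ≤ K) :
    Integrable f μ ∧ ∫ x, f x ∂μ ≤ K := by
  have hf_meas : AEStronglyMeasurable f μ :=
    aestronglyMeasurable_of_tendsto_ae _ (fun n => (hu n).aestronglyMeasurable) hlim
  have hf_nonneg : 0 ≤ᵐ[μ] f := by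
    filter_upwards [hlim, ae_all_iff.mpr hu_nonneg] with x hx hux
    exact ge_of_tendsto' hx hux
  have hK_nonneg : 0 ≤ K := (integral_nonneg_of_ae (hu_nonneg 0)).trans (hK 0)
  have hlintegral : ∫⁻ x, ENNReal.ofReal (f x) ∂μ ≤ ENNReal.ofReal K :=
    calc ∫⁻ x, ENNReal.ofReal (f x) ∂μ
        = ∫⁻ x, atTop.liminf (fun n => ENNReal.ofReal (u n x)) ∂μ := by
          refine lintegral_congr_ae ?_
          filter_upwards [hlim] with x hx using (ENNReal.tendsto_ofReal hx).liminf_eq.symm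
      _ ≤ atTop.liminf (fun n => ∫⁻ x, ENNReal.ofReal (u n x) ∂μ) :=
          lintegral_liminf_le' fun n => (hu n).aemeasurable.ennreal_ofReal
      _ ≤ ENNReal.ofReal K := by
          refine liminf_le_of_frequently_le' (.of_forall fun n => ?_)
          rw [← ofReal_integral_eq_lintegral_ofReal (hu n) (hu_nonneg n)]
          exact ENNReal.ofReal_le_ofReal (hK n)
  refine ⟨⟨hf_meas, ?_⟩, ?_⟩
  · rw [hasFiniteIntegral_iff_ofReal hf_nonneg]
    exact hlintegral.trans_lt ENNReal.ofReal_lt_top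
  · rw [integral_eq_lintegral_of_nonneg_ae hf_nonneg hf_meas]
    exact ENNReal.toReal_le_of_le_ofReal hK_nonneg hlintegral

theorem tendsto_inv_sq_norm_add_one_div_mul {E : Type*} [NormedAddCommGroup E] {y : E} (hy : y ≠ 0)
    (a : ℝ) :
    Tendsto (fun n : ℕ => (‖y‖ ^ 2 + 1 / ((n : ℝ) + 1))⁻¹ * a) atTop
      (𝓝 (a / ‖y‖ ^ 2)) := by
  have hne : ‖y‖ ^ 2 + 0 ≠ 0 := by positivity
  simpa [div_eq_inv_mul] using
    ((tendsto_one_div_add_atTop_nhds_zero_nat.const_add (‖y‖ ^ 2)).inv₀ hne).mul_const a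

variable {E F ι : Type*} [NormedAddCommGroup E] [InnerProductSpace ℝ E] [FiniteDimensional ℝ E]
  [MeasurableSpace E] [BorelSpace E] {μ : Measure E} [μ.IsAddHaarMeasure]
  [NormedAddCommGroup F] [InnerProductSpace ℝ F] [Fintype ι]

theorem regularized_hardy_harmonic (b : OrthonormalBasis ι ℝ E) {ψ : E → F} (hψ : ContDiff ℝ 1 ψ)
    (hsupp : HasCompactSupport ψ) {D : E → E →ₗ[ℝ] F}
    (hD : ∀ y v, ⟪ψ y, D y v⟫ = ⟪ψ y, fderiv ℝ ψ y v⟫)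
    (hint : Integrable (fun y => ∑ j, ‖D y (b j)‖ ^ 2) μ) {c ω ε : ℝ} (hc : 0 ≤ c)
    (hdim : (Module.finrank ℝ E : ℝ) = 2 * c + 2) (hω : 0 ≤ ω) (hε : 0 < ε) :
    ∫ y, c ^ 2 * ((‖y‖ ^ 2 + ε)⁻¹ * ‖ψ y‖ ^ 2) ∂μ
      ≤ ∫ y, ∑ j, ‖D y (b j)‖ ^ 2 ∂μ + ω ^ 2 * ∫ y, ‖y‖ ^ 2 * ‖ψ y‖ ^ 2 ∂μ
        - 2 * ω * ∫ y, ‖ψ y‖ ^ 2 ∂μ := by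
  have hinv_cont : Continuous fun y : E => (‖y‖ ^ 2 + ε)⁻¹ :=
    (by fun_prop : Continuous fun y : E => ‖y‖ ^ 2 + ε).inv₀ fun y => by positivity
  have hV := contDiff_regularizedHardyField (E := E) (c := c) (ω := ω) hε
  have hinv : Integrable (fun y => c ^ 2 * ((‖y‖ ^ 2 + ε)⁻¹ * ‖ψ y‖ ^ 2)) μ :=
    (integrable_mul_sq_norm μ hinv_cont hψ.continuous hsupp).const_mul _
  have hmass : Integrable (fun y => 2 * ω * ‖ψ y‖ ^ 2) μ :=
    integrable_mul_sq_norm μ continuous_const hψ.continuous hsupp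
  have hmoment : Integrable (fun y => ω ^ 2 * (‖y‖ ^ 2 * ‖ψ y‖ ^ 2)) μ :=
    (integrable_mul_sq_norm μ (by fun_prop) hψ.continuous hsupp).const_mul _
  have hsum : Integrable (fun y =>
      c ^ 2 * ((‖y‖ ^ 2 + ε)⁻¹ * ‖ψ y‖ ^ 2) + 2 * ω * ‖ψ y‖ ^ 2) μ := hinv.add hmass
  have hpointwise (y : E) : c ^ 2 * ((‖y‖ ^ 2 + ε)⁻¹ * ‖ψ y‖ ^ 2) + 2 * ω * ‖ψ y‖ ^ 2
      - ω ^ 2 * (‖y‖ ^ 2 * ‖ψ y‖ ^ 2) ≤ (divergence (regularizedHardyField c ω ε) y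
        - ‖regularizedHardyField c ω ε y‖ ^ 2) * ‖ψ y‖ ^ 2 :=
    le_of_eq_of_le (by ring) (mul_le_mul_of_nonneg_right
      (le_divergence_sub_sq_norm_regularizedHardyField hc hdim hω hε y) (sq_nonneg ‖ψ y‖))
  have hground : ∫ y, (c ^ 2 * ((‖y‖ ^ 2 + ε)⁻¹ * ‖ψ y‖ ^ 2) + 2 * ω * ‖ψ y‖ ^ 2
      - ω ^ 2 * (‖y‖ ^ 2 * ‖ψ y‖ ^ 2)) ∂μ ≤ ∫ y, ∑ j, ‖D y (b j)‖ ^ 2 ∂μ :=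
    (integral_mono (hsum.sub hmoment) (integrable_mul_sq_norm μ
      ((continuous_divergence hV).sub (hV.continuous.norm.pow 2)) hψ.continuous hsupp)
      hpointwise).trans (integral_divergence_sub_sq_norm_mul_le b hψ hsupp hD hint hV)
  rw [integral_sub hsum hmoment, integral_add hinv hmass, integral_const_mul (2 * ω),
    integral_const_mul (ω ^ 2)] at hground
  linarith

theorem stmt13_general (b : OrthonormalBasis ι ℝ E) (hdim : 2 ≤ Module.finrank ℝ E) {ψ : E → F}
    (hψ : ContDiff ℝ 1 ψ) (hsupp : HasCompactSupport ψ) {D : E → E →ₗ[ℝ] F}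
    (hD : ∀ y v, ⟪ψ y, D y v⟫ = ⟪ψ y, fderiv ℝ ψ y v⟫)
    (hint : Integrable (fun y => ∑ j, ‖D y (b j)‖ ^ 2) μ) {ω : ℝ} (hω : 0 ≤ ω) :
    Integrable (fun y => ((Module.finrank ℝ E - 2 : ℝ) / 2) ^ 2 * (‖ψ y‖ ^ 2 / ‖y‖ ^ 2)) μ ∧
      2 * ω * ∫ y, ‖ψ y‖ ^ 2 ∂μ
        ≤ ∫ y, ∑ j, ‖D y (b j)‖ ^ 2 ∂μ
          - ((Module.finrank ℝ E - 2 : ℝ) / 2) ^ 2 * ∫ y, ‖ψ y‖ ^ 2 / ‖y‖ ^ 2 ∂μ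
          + ω ^ 2 * ∫ y, ‖y‖ ^ 2 * ‖ψ y‖ ^ 2 ∂μ := by
  have : Nontrivial E := Module.nontrivial_of_finrank_pos (R := ℝ) (by omega)
  have hdim' : (2 : ℝ) ≤ Module.finrank ℝ E := by exact_mod_cast hdim
  set c : ℝ := (Module.finrank ℝ E - 2 : ℝ) / 2 with hc
  have hε (n : ℕ) : 0 < 1 / ((n : ℝ) + 1) := Nat.one_div_pos_of_nat
  have hne : ∀ᵐ y ∂μ, y ≠ 0 := by simp [ae_iff]
  obtain ⟨hhardy, hle⟩ := integrable_and_integral_le_of_tendsto (μ := μ)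
    (u := fun n y => c ^ 2 * ((‖y‖ ^ 2 + 1 / ((n : ℝ) + 1))⁻¹ * ‖ψ y‖ ^ 2))
    (f := fun y => c ^ 2 * (‖ψ y‖ ^ 2 / ‖y‖ ^ 2))
    (fun n => (integrable_mul_sq_norm μ (Continuous.inv₀ (by fun_prop) fun y =>
      (add_pos_of_nonneg_of_pos (sq_nonneg ‖y‖) (hε n)).ne') hψ.continuous hsupp).const_mul _)
    (fun n => .of_forall fun y => by positivity)
    (by filter_upwards [hne] with y hy
        exact (tendsto_inv_sq_norm_add_one_div_mul hy _).const_mul _)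
    (fun n => regularized_hardy_harmonic b hψ hsupp hD hint (by linarith) (by linarith) hω (hε n))
  rw [integral_const_mul] at hle
  exact ⟨hhardy, by linarith⟩

end Hardy

section MagneticDerivative

variable {E : Type*} [NormedAddCommGroup E] [InnerProductSpace ℝ E]

/-- The magnetic derivative `(∇ - iA)ψ` at `y`, as a linear form in the direction of
differentiation. -/
noncomputable def magneticDeriv (A : E → E) (ψ : E → ℂ) (y : E) : E →L[ℝ] ℂ :=
  fderiv ℝ ψ y - (innerSL ℝ (A y)).smulRight (Complex.I * ψ y)

theorem magneticDeriv_apply (A : E → E) (ψ : E → ℂ) (y v : E) :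
    magneticDeriv A ψ y v = fderiv ℝ ψ y v - Complex.I * (⟪A y, v⟫ : ℝ) * ψ y := by
  simp only [magneticDeriv, sub_apply, ContinuousLinearMap.smulRight_apply, coe_innerSL_apply,
    Complex.real_smul]
  ring

theorem inner_magneticDeriv_apply (A : E → E) (ψ : E → ℂ) (y v : E) :
    ⟪ψ y, magneticDeriv A ψ y v⟫ = ⟪ψ y, fderiv ℝ ψ y v⟫ := by
  have horth : ⟪ψ y, Complex.I * ψ y⟫ = 0 := by
    simp [Complex.inner, mul_comm]
  rw [magneticDeriv, sub_apply, ContinuousLinearMap.smulRight_apply, inner_sub_right,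
    inner_smul_right, horth, mul_zero, sub_zero]

theorem integrable_sum_sq_norm_magneticDeriv [MeasurableSpace E] [OpensMeasurableSpace E]
    {ι : Type*} [Fintype ι] (μ : Measure E) [IsFiniteMeasureOnCompacts μ] {A : E → E} {ψ : E → ℂ}
    (hA : Continuous A) (hψ : ContDiff ℝ 1 ψ) (hsupp : HasCompactSupport ψ) (v : ι → E) :
    Integrable (fun y => ∑ j, ‖magneticDeriv A ψ y (v j)‖ ^ 2) μ := by
  refine integrable_finsetSum _ fun j _ => Continuous.integrable_of_hasCompactSupport ?_ ?_
  · have hfderiv : Continuous fun y => fderiv ℝ ψ y (v j) :=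
      (hψ.continuous_fderiv one_ne_zero).clm_apply continuous_const
    have hψ_cont := hψ.continuous
    simp_rw [magneticDeriv_apply]
    exact (hfderiv.sub (by fun_prop)).norm.pow 2
  · simp_rw [magneticDeriv_apply]
    exact hasCompactSupport_sq_norm ((hsupp.fderiv_apply ℝ (v j)).sub hsupp.mul_left)

end MagneticDerivative

theorem stmt13 (d : ℕ) (hd : 2 ≤ d)
    (A : EuclideanSpace ℝ (Fin d) → EuclideanSpace ℝ (Fin d)) (hA : ContDiff ℝ (⊤ : ℕ∞) A)
    (s : ℝ) (hs : 0 ≤ s)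
    (ψ : EuclideanSpace ℝ (Fin d) → ℂ) (hψ : ContDiff ℝ (⊤ : ℕ∞) ψ) (hsupp : HasCompactSupport ψ) :
    (∫ y, ∑ j, ‖fderiv ℝ ψ y (EuclideanSpace.single j (1:ℝ))
        - Complex.I * (Real.exp (s/2) * A (Real.exp (s/2) • y) j : ℝ) * ψ y‖ ^ 2)
      - ((d - 2 : ℝ)/2)^2 * (∫ y, ‖ψ y‖^2 / ‖y‖^2)
      + (1/16 : ℝ) * (∫ y, ‖y‖^2 * ‖ψ y‖^2)
    ≥ (1/2 : ℝ) * ∫ y, ‖ψ y‖^2 := by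
  have hψ1 : ContDiff ℝ 1 ψ := hψ.of_le (by exact_mod_cast le_top)
  have hA_cont := hA.continuous
  have h := (stmt13_general (μ := volume) (EuclideanSpace.basisFun (Fin d) ℝ) (by simpa using hd)
    hψ1 hsupp (inner_magneticDeriv_apply (fun y => exp (s / 2) • A (exp (s / 2) • y)) ψ)
    (integrable_sum_sq_norm_magneticDeriv volume (by fun_prop) hψ1 hsupp _)
    (ω := 1 / 4) (by norm_num)).2
  simp only [ContinuousLinearMap.coe_coe, EuclideanSpace.basisFun_apply, magneticDeriv_apply,
    EuclideanSpace.inner_single_right, conj_trivial, one_mul, PiLp.smul_apply, smul_eq_mul,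
    finrank_euclideanSpace_fin] at h
  linarith
end
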